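/- Let η, ν ≥ 0 with ν > 0, and set U(r) := c₀ ∫_r^∞ e^{−s²/4} ds with U(0)=1. Define φ(x, t) := U((|x| − ηt)⁺/√(νt)) for x ∈ ℝ^d, t > 0. Then for every t > 0 and x with |x| > ηt, φ is smooth near (x,t) and satisfies the equality ∂_t φ = η|Dφ| + ν·max{λ⁺ : λ eigenvalue of D²φ} classically, where the largest positive part of the eigenvalues of the Hessian D²φ at such a point equals U''(r)/(νt)·ν with r = (|x|−ηt)/√(νt); more precisely ∂_t φ − η|Dφ| − ν sup_{λ ∈ Sp(D²φ)} λ⁺ = −(r U'(r)/2 + U''(r))/t = 0. -/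

import Mathlib

lemma integrable_exp_neg_sq_div_four :
    MeasureTheory.Integrable fun s : ℝ => Real.exp (-s ^ 2 / 4) := by
  have h := integrable_exp_neg_mul_sq (b := 1 / 4) (by norm_num)
  refine h.congr (Filter.Eventually.of_forall fun s => ?_)
  simp only
  congr 1
  ring

lemma integral_Ioi_exp_neg_sq_div_four_pos :
    0 < ∫ s in Set.Ioi (0 : ℝ), Real.exp (-s ^ 2 / 4) := by
  have h : (fun s : ℝ => Real.exp (-s ^ 2 / 4)) = fun s => Real.exp (-(1 / 4) * s ^ 2) := by
    funext s
    congr 1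
    ring
  rw [h, integral_gaussian_Ioi]
  positivity

lemma hasDerivAt_integral_Ioi_exp_neg_sq_div_four (r : ℝ) :
    HasDerivAt (fun r => ∫ s in Set.Ioi r, Real.exp (-s ^ 2 / 4)) (-Real.exp (-r ^ 2 / 4)) r := by
  have hi := integrable_exp_neg_sq_div_four
  have hcont : Continuous fun s : ℝ => Real.exp (-s ^ 2 / 4) := by fun_prop
  have h : (fun r => ∫ s in Set.Ioi r, Real.exp (-s ^ 2 / 4)) = fun r =>
      (∫ s in Set.Ioi (0 : ℝ), Real.exp (-s ^ 2 / 4)) - ∫ s in (0 : ℝ)..r, Real.exp (-s ^ 2 / 4) := by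
    funext r
    rw [← intervalIntegral.integral_interval_add_Ioi hi.integrableOn hi.integrableOn (a := 0) (b := r)]
    ring
  rw [h]
  exact (hcont.integral_hasStrictDerivAt 0 r).hasDerivAt.const_sub _

lemma hasDerivAt_exp_neg_sq_div_four (r : ℝ) :
    HasDerivAt (fun r : ℝ => Real.exp (-r ^ 2 / 4)) (-(r / 2) * Real.exp (-r ^ 2 / 4)) r := by
  have h : HasDerivAt (fun r : ℝ => -r ^ 2 / 4) (-(r / 2)) r :=
    ((hasDerivAt_pow 2 r).neg.div_const 4).congr_deriv (by norm_num; ring)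
  exact h.exp.congr_deriv (mul_comm _ _)

lemma hasFDerivAt_norm_of_ne_zero {E : Type*} [NormedAddCommGroup E] [InnerProductSpace ℝ E]
    {x : E} (hx : x ≠ 0) :
    HasFDerivAt (fun y : E => ‖y‖) (‖x‖⁻¹ • innerSL ℝ x) x := by
  have h := (hasStrictFDerivAt_norm_sq x).hasFDerivAt.sqrt (by simpa using hx)
  have h' : (fun y : E => √(‖y‖ ^ 2)) = fun y => ‖y‖ := by
    funext y
    exact Real.sqrt_sq (norm_nonneg y)
  rw [h'] at h
  convert h using 1
  rw [Real.sqrt_sq (norm_nonneg x)]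
  ext v
  simp
  field_simp

lemma HasDerivAt.hasFDerivAt_comp_norm {E : Type*} [NormedAddCommGroup E]
    [InnerProductSpace ℝ E] {f : ℝ → ℝ} {f' : ℝ} {x : E} (hf : HasDerivAt f f' ‖x‖)
    (hx : x ≠ 0) :
    HasFDerivAt (fun y : E => f ‖y‖) ((f' / ‖x‖) • innerSL ℝ x) x := by
  exact (hf.comp_hasFDerivAt x (hasFDerivAt_norm_of_ne_zero hx)).congr_fderiv
    (by rw [smul_smul, div_eq_mul_inv])

lemma HasDerivAt.norm_gradient_comp_norm {E : Type*} [NormedAddCommGroup E]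
    [InnerProductSpace ℝ E] [CompleteSpace E] {f : ℝ → ℝ} {f' : ℝ} {x : E}
    (hf : HasDerivAt f f' ‖x‖) (hx : x ≠ 0) :
    ‖gradient (fun y : E => f ‖y‖) x‖ = |f'| := by
  have hn : ‖x‖ ≠ 0 := norm_ne_zero_iff.mpr hx
  rw [gradient, LinearIsometryEquiv.norm_map, (hf.hasFDerivAt_comp_norm hx).fderiv, norm_smul,
    innerSL_apply_norm, norm_div, norm_norm, Real.norm_eq_abs]
  field_simp

/-- The second derivatives of a radial function. -/
lemma fderiv_fderiv_comp_norm {d : ℕ} {f f' : ℝ → ℝ} {f'' : ℝ} {x : EuclideanSpace ℝ (Fin d)}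
    (hx : x ≠ 0) (hf : ∀ᶠ ρ in nhds ‖x‖, HasDerivAt f (f' ρ) ρ) (hf' : HasDerivAt f' f'' ‖x‖)
    (i j : Fin d) :
    fderiv ℝ (fun y : EuclideanSpace ℝ (Fin d) =>
        fderiv ℝ (fun z : EuclideanSpace ℝ (Fin d) => f ‖z‖) y (EuclideanSpace.single j 1)) x
        (EuclideanSpace.single i 1) =
      f' ‖x‖ / ‖x‖ * (if i = j then 1 else 0) +
        (f'' - f' ‖x‖ / ‖x‖) / ‖x‖ ^ 2 * (x i * x j) := by
  have hn : ‖x‖ ≠ 0 := norm_ne_zero_iff.mpr hx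
  have hev : (fun y : EuclideanSpace ℝ (Fin d) =>
      fderiv ℝ (fun z : EuclideanSpace ℝ (Fin d) => f ‖z‖) y (EuclideanSpace.single j 1))
      =ᶠ[nhds x] fun y => f' ‖y‖ / ‖y‖ * y j := by
    filter_upwards [continuous_norm.continuousAt.eventually hf, isOpen_ne.mem_nhds hx]
      with y hy hy0
    rw [(hy.hasFDerivAt_comp_norm hy0).fderiv]
    simp [EuclideanSpace.inner_single_right]
  have hg := (hf'.div (hasDerivAt_id ‖x‖) hn).hasFDerivAt_comp_norm hx
  have hj := (EuclideanSpace.proj (𝕜 := ℝ) j : EuclideanSpace ℝ (Fin d) →L[ℝ] ℝ).hasFDerivAt (x := x)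
  have h := hg.mul hj
  rw [hev.fderiv_eq]
  refine (congrArg (fun L => L (EuclideanSpace.single i 1)) h.fderiv).trans ?_
  simp [EuclideanSpace.inner_single_right, eq_comm]
  field_simp

/-- A multiple of the identity plus a rank-one matrix, with top eigenvalue in direction `x`. -/
lemma Matrix.isGreatest_image_posPart_spectrum {d : ℕ} {M : Matrix (Fin d) (Fin d) ℝ}
    {x : Fin d → ℝ} {a b k : ℝ} (hx : x ≠ 0)
    (hM : ∀ i j, M i j = a * (if i = j then 1 else 0) + k * (x i * x j))
    (hk : a + k * (x ⬝ᵥ x) = b) (ha : a ≤ 0) (hb : 0 ≤ b) :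
    IsGreatest ((fun l => max l 0) '' spectrum ℝ M) b := by
  have hmul : ∀ v, M.mulVec v = a • v + (k * (x ⬝ᵥ v)) • x := by
    intro v
    ext i
    simp only [Matrix.mulVec, dotProduct, hM, Pi.add_apply, Pi.smul_apply, smul_eq_mul, add_mul,
      Finset.sum_add_distrib, Finset.mul_sum, Finset.sum_mul]
    congr 1
    · simp
    · exact Finset.sum_congr rfl fun j _ => by ring
  have hspec : ∀ l, l ∈ spectrum ℝ M ↔ Module.End.HasEigenvalue (Matrix.toLin' M) l := by
    intro l
    rw [Module.End.hasEigenvalue_iff_mem_spectrum, Matrix.spectrum_toLin']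
  constructor
  · refine ⟨b, (hspec b).2 ?_, max_eq_left hb⟩
    refine Module.End.hasEigenvalue_of_hasEigenvector (x := x)
      ⟨Module.End.mem_eigenspace_iff.2 ?_, hx⟩
    rw [Matrix.toLin'_apply, hmul, ← hk, add_smul]
  · rintro _ ⟨l, hl, rfl⟩
    refine max_le ?_ hb
    obtain ⟨v, hv⟩ := ((hspec l).1 hl).exists_hasEigenvector
    have hv1 : a • v + (k * (x ⬝ᵥ v)) • x = l • v := by
      rw [← hmul, ← Matrix.toLin'_apply]
      exact hv.apply_eq_smul
    by_cases hxv : x ⬝ᵥ v = 0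
    · rw [hxv, mul_zero, zero_smul, add_zero] at hv1
      have : a = l := smul_left_injective ℝ hv.2 hv1
      linarith
    · have h := congrArg (fun w => x ⬝ᵥ w) hv1
      simp only [dotProduct_add, dotProduct_smul, smul_eq_mul] at h
      have : b = l := mul_right_cancel₀ hxv (by rw [← hk]; linarith)
      exact this.ge


/-- The function `φ(x,t) = U((|x| - ηt)⁺/√(νt))` solves
`∂_t φ = η|Dφ| + ν sup_{λ ∈ Sp(D²φ)} λ⁺` classically in the region `|x| > ηt`, `t > 0`,
where the sup of positive parts of the eigenvalues of the Hessian equals `U''(r)/(νt)`,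
`r = (|x| - ηt)/√(νt)`; more precisely
`∂_t φ - η|Dφ| - ν sup λ⁺ = -(rU'(r)/2 + U''(r))/t = 0`. -/
theorem stmt_8 (d : ℕ) (hd : 1 ≤ d) (η ν : ℝ) (hη : 0 ≤ η) (hν : 0 < ν)
    (c₀ : ℝ) (hc₀ : c₀ = (∫ s in Set.Ioi (0 : ℝ), Real.exp (-s ^ 2 / 4))⁻¹)
    (U : ℝ → ℝ) (hU : ∀ r, U r = c₀ * ∫ s in Set.Ioi r, Real.exp (-s ^ 2 / 4))
    (t : ℝ) (ht : 0 < t) (x : EuclideanSpace ℝ (Fin d)) (hx : η * t < ‖x‖)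
    (φ : EuclideanSpace ℝ (Fin d) → ℝ)
    (hφ : ∀ y, φ y = U (max (‖y‖ - η * t) 0 / Real.sqrt (ν * t)))
    (r : ℝ) (hr : r = (‖x‖ - η * t) / Real.sqrt (ν * t))
    (Hess : Matrix (Fin d) (Fin d) ℝ)
    (hHess : ∀ i j, Hess i j
      = fderiv ℝ (fun y => fderiv ℝ φ y (EuclideanSpace.single j 1)) x
          (EuclideanSpace.single i 1)) :
    ContDiffAt ℝ (⊤ : ℕ∞) φ x ∧
    sSup ((fun l => max l 0) '' spectrum ℝ Hess) = deriv (deriv U) r / (ν * t) ∧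
    deriv (fun τ => U (max (‖x‖ - η * τ) 0 / Real.sqrt (ν * τ))) t
        - η * ‖gradient φ x‖
        - ν * sSup ((fun l => max l 0) '' spectrum ℝ Hess)
      = -(r * deriv U r / 2 + deriv (deriv U) r) / t ∧
    -(r * deriv U r / 2 + deriv (deriv U) r) / t = 0 := by
  have hc : 0 < c₀ := hc₀ ▸ inv_pos.2 integral_Ioi_exp_neg_sq_div_four_pos
  have hU1 : ∀ r, HasDerivAt U (-c₀ * Real.exp (-r ^ 2 / 4)) r := by
    intro r
    rw [funext hU]
    exact ((hasDerivAt_integral_Ioi_exp_neg_sq_div_four r).const_mul c₀).congr_deriv (by ring)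
  have hdU : deriv U = fun r => -c₀ * Real.exp (-r ^ 2 / 4) := funext fun r => (hU1 r).deriv
  have hU2 : ∀ r, HasDerivAt (deriv U) (c₀ * (r / 2) * Real.exp (-r ^ 2 / 4)) r := by
    intro r
    rw [hdU]
    exact ((hasDerivAt_exp_neg_sq_div_four r).const_mul (-c₀)).congr_deriv (by ring)
  have hUsmooth : ContDiff ℝ (⊤ : ℕ∞) U := by
    rw [contDiff_infty_iff_deriv]
    refine ⟨fun r => (hU1 r).differentiableAt, ?_⟩
    rw [hdU]
    fun_prop
  have hode : r * deriv U r / 2 + deriv (deriv U) r = 0 := by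
    rw [(hU2 r).deriv, (hU1 r).deriv]
    ring
  have hs : 0 < Real.sqrt (ν * t) := Real.sqrt_pos.2 (mul_pos hν ht)
  have hs2 : Real.sqrt (ν * t) ^ 2 = ν * t := Real.sq_sqrt (mul_pos hν ht).le
  have hn : 0 < ‖x‖ := (mul_nonneg hη ht.le).trans_lt hx
  have hx0 : x ≠ 0 := norm_pos_iff.1 hn
  have hr0 : 0 < r := hr ▸ div_pos (sub_pos.2 hx) hs
  have hφx : φ =ᶠ[nhds x] fun y => U ((‖y‖ - η * t) / Real.sqrt (ν * t)) := by
    filter_upwards [(isOpen_lt continuous_const continuous_norm).mem_nhds hx] with y hy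
    rw [hφ, max_eq_left (sub_nonneg.2 (le_of_lt hy))]
  have hlin : ∀ ρ, HasDerivAt (fun ρ => (ρ - η * t) / Real.sqrt (ν * t))
      (1 / Real.sqrt (ν * t)) ρ := fun ρ => ((hasDerivAt_id ρ).sub_const _).div_const _
  have hV1 : ∀ ρ, HasDerivAt (fun ρ => U ((ρ - η * t) / Real.sqrt (ν * t)))
      (deriv U ((ρ - η * t) / Real.sqrt (ν * t)) * (1 / Real.sqrt (ν * t))) ρ := fun ρ =>
    ((hU1 _).differentiableAt.hasDerivAt).comp ρ (hlin ρ)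
  have hV2 : HasDerivAt
      (fun ρ => deriv U ((ρ - η * t) / Real.sqrt (ν * t)) * (1 / Real.sqrt (ν * t)))
      (deriv (deriv U) r / (ν * t)) ‖x‖ := by
    have h := (((hU2 _).differentiableAt.hasDerivAt).comp ‖x‖ (hlin ‖x‖)).mul_const
      (1 / Real.sqrt (ν * t))
    refine h.congr_deriv ?_
    rw [← hr, mul_assoc, div_mul_div_comm, ← sq (Real.sqrt _), hs2, mul_one, mul_one_div]
  have hgrad : ‖gradient φ x‖ = -deriv U r / Real.sqrt (ν * t) := by
    have h := (hV1 ‖x‖).norm_gradient_comp_norm hx0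
    rw [gradient, hφx.fderiv_eq, ← gradient, h, ← hr, (hU1 r).deriv, abs_of_nonpos]
    · ring
    · have : 0 < c₀ * Real.exp (-r ^ 2 / 4) * (1 / Real.sqrt (ν * t)) := by positivity
      linarith
  have hsup : sSup ((fun l => max l 0) '' spectrum ℝ Hess) = deriv (deriv U) r / (ν * t) := by
    refine (Matrix.isGreatest_image_posPart_spectrum (x := fun i => x i)
      (a := deriv U r * (1 / Real.sqrt (ν * t)) / ‖x‖)
      (k := (deriv (deriv U) r / (ν * t) - deriv U r * (1 / Real.sqrt (ν * t)) / ‖x‖) / ‖x‖ ^ 2)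
      ?_ ?_ ?_ ?_ ?_).csSup_eq
    · intro h
      exact hx0 (by ext i; exact congrFun h i)
    · intro i j
      have hev : (fun y => fderiv ℝ φ y (EuclideanSpace.single j 1)) =ᶠ[nhds x] fun y =>
          fderiv ℝ (fun z : EuclideanSpace ℝ (Fin d) => U ((‖z‖ - η * t) / Real.sqrt (ν * t))) y
            (EuclideanSpace.single j 1) :=
        hφx.fderiv.fun_comp fun L => L (EuclideanSpace.single j 1)
      have h := fderiv_fderiv_comp_norm hx0 (Filter.Eventually.of_forall hV1) hV2 i j
      rw [hHess, hev.fderiv_eq, h, ← hr]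
    · have h : (fun i => x i) ⬝ᵥ (fun i => x i) = ‖x‖ ^ 2 := by
        rw [EuclideanSpace.real_norm_sq_eq]
        exact Finset.sum_congr rfl fun i _ => (sq (x i)).symm
      rw [h]
      field_simp
      ring
    · rw [(hU1 r).deriv]
      have : 0 < c₀ * Real.exp (-r ^ 2 / 4) * (1 / Real.sqrt (ν * t)) / ‖x‖ := by positivity
      linarith [this, show -c₀ * Real.exp (-r ^ 2 / 4) * (1 / Real.sqrt (ν * t)) / ‖x‖ =
        -(c₀ * Real.exp (-r ^ 2 / 4) * (1 / Real.sqrt (ν * t)) / ‖x‖) by ring]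
    · rw [(hU2 r).deriv]
      positivity
  have htime : HasDerivAt (fun τ => U (max (‖x‖ - η * τ) 0 / Real.sqrt (ν * τ)))
      (deriv U r * (-η / Real.sqrt (ν * t) - r / (2 * t))) t := by
    have hev : (fun τ => U (max (‖x‖ - η * τ) 0 / Real.sqrt (ν * τ))) =ᶠ[nhds t]
        fun τ => U ((‖x‖ - η * τ) / Real.sqrt (ν * τ)) := by
      filter_upwards [(isOpen_lt (continuous_const_mul η) continuous_const).mem_nhds hx]
        with τ hτ
      rw [max_eq_left (sub_nonneg.2 (le_of_lt hτ))]
    refine HasDerivAt.congr_of_eventuallyEq ?_ hev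
    have hnum : HasDerivAt (fun τ => ‖x‖ - η * τ) (-η) t := by
      simpa using ((hasDerivAt_id t).const_mul η).const_sub ‖x‖
    have hden : HasDerivAt (fun τ => Real.sqrt (ν * τ)) (ν / (2 * Real.sqrt (ν * t))) t := by
      simpa using ((hasDerivAt_id t).const_mul ν).sqrt (mul_pos hν ht).ne'
    have hq : HasDerivAt (fun τ => (‖x‖ - η * τ) / Real.sqrt (ν * τ))
        (-η / Real.sqrt (ν * t) - r / (2 * t)) t := by
      refine (hnum.div hden hs.ne').congr_deriv ?_
      have ht' : t = Real.sqrt (ν * t) ^ 2 / ν := by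
        rw [hs2]
        field_simp
      rw [hr]
      generalize Real.sqrt (ν * t) = s at *
      generalize ‖x‖ - η * t = m at *
      rw [ht']
      field_simp
    rw [hr] at hq ⊢
    exact ((hU1 _).differentiableAt.hasDerivAt).comp t hq
  refine ⟨?_, hsup, ?_, ?_⟩
  · refine ContDiffAt.congr_of_eventuallyEq ?_ hφx
    exact hUsmooth.contDiffAt.comp x
      (((contDiffAt_norm ℝ hx0).sub contDiffAt_const).div_const _)
  · rw [htime.deriv, hgrad, hsup]
    field_simp
    ring
  · rw [hode, neg_zero, zero_div]
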